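/- Let X be a permutation point set and let OPT(X) be a point set of minimum cardinality such that X ∪ OPT(X) is an arborally satisfied set. Then 2 · |X ∪ OPT(X)| ≥ |GR| + 2 · |X|, where GR is the set of points of G whose pair is a good pair. -/

import Mathlib

open Finset

attribute [local instance] Classical.propDecidable

/-- A point in the plane: first coordinate is the key, second is the time. -/
abbrev Pt : Type := ℤ × ℤ

/-- `r` lies in the closed axis-parallel rectangle with opposite corners `p` and `q`. -/
def inRect (p q r : Pt) : Prop :=
  min p.1 q.1 ≤ r.1 ∧ r.1 ≤ max p.1 q.1 ∧ min p.2 q.2 ≤ r.2 ∧ r.2 ≤ max p.2 q.2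

/-- `r` lies in the open axis-parallel rectangle with opposite corners `p` and `q`. -/
def inOpenRect (p q r : Pt) : Prop :=
  min p.1 q.1 < r.1 ∧ r.1 < max p.1 q.1 ∧ min p.2 q.2 < r.2 ∧ r.2 < max p.2 q.2

/-- `S` is an arborally satisfied set. -/
def ArbSat (S : Finset Pt) : Prop :=
  ∀ p ∈ S, ∀ q ∈ S, p.1 = q.1 ∨ p.2 = q.2 ∨ ∃ r ∈ S, r ≠ p ∧ r ≠ q ∧ inRect p q r

/-- `X` is the permutation point set `{(σ(t), t) : 1 ≤ t ≤ n}` of some permutation `σ` of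
`{1, …, n}`. -/
def IsPermPointSet (n : ℕ) (X : Finset Pt) : Prop :=
  ∃ σ : Equiv.Perm (Fin n),
    X = Finset.univ.image (fun t : Fin n => ((((σ t : ℕ) : ℤ) + 1, ((t : ℕ) : ℤ) + 1) : Pt))

/-- The points added by GREEDY at time `t`, given the point set `X` and the set `G` of points
added before time `t`: for the point `p` of `X` with time `t` and each point `q` of time `< t`
with a different key such that the rectangle spanned by `p` and `q` contains no other point of
time `< t`, the point `(key q, t)` is added. -/
noncomputable def greedyStep (X G : Finset Pt) (t : ℤ) : Finset Pt :=
  (X.filter (fun p => p.2 = t)).biUnion (fun p =>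
    (((X ∪ G).filter (fun s => s.2 < t)).filter (fun q =>
      q.1 ≠ p.1 ∧ ∀ r ∈ (X ∪ G).filter (fun s => s.2 < t), inRect p q r → r = q)).image
      (fun q => ((q.1, t) : Pt)))

/-- All points added by GREEDY while processing times `1, …, t`. -/
noncomputable def greedyUpTo (X : Finset Pt) : ℕ → Finset Pt
  | 0 => ∅
  | t + 1 => greedyUpTo X t ∪ greedyStep X (greedyUpTo X t) ((t : ℤ) + 1)

/-- The set `G` of points added by GREEDY over the whole execution on a permutation point set
`X` of size `n`. -/
noncomputable def greedyG (n : ℕ) (X : Finset Pt) : Finset Pt := greedyUpTo X n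

/-- `OP r` is the point of `X` processed at the time at which `r` was added; for `r ∈ X`,
`OP r = r`. -/
noncomputable def OP (X : Finset Pt) (r : Pt) : Pt :=
  ((X.filter (fun p => p.2 = r.2)).toList).headI

/-- The first point of `S` above `p`: the point of `S` with the same key as `p`, smaller time,
and the largest such time. -/
noncomputable def firstAbove (S : Finset Pt) (p : Pt) : Pt :=
  (p.1, (((S.filter (fun q => q.1 = p.1 ∧ q.2 < p.2)).image Prod.snd).max).unbotD 0)

/-- The pair `CP(p) = (OP(p), OP(q))` where `q` is the first point of `X ∪ G` above `p`. -/
noncomputable def CP (X G : Finset Pt) (p : Pt) : Pt × Pt :=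
  (OP X p, OP X (firstAbove (X ∪ G) p))

/-- `CP(p) ∈ MMC` (*zig*). -/
def inMMC (X G : Finset Pt) (p : Pt) : Prop :=
  ((CP X G p).1.1 < p.1 ∧ (CP X G p).2.1 < (CP X G p).1.1 ∧ (CP X G p).2.2 < (CP X G p).1.2)
  ∨ (p.1 < (CP X G p).1.1 ∧ (CP X G p).1.1 < (CP X G p).2.1 ∧ (CP X G p).2.2 < (CP X G p).1.2)

/-- `CP(p) ∈ MFC` (*zag*). -/
def inMFC (X G : Finset Pt) (p : Pt) : Prop :=
  ((CP X G p).1.1 < p.1 ∧ p.1 ≤ (CP X G p).2.1 ∧ (CP X G p).2.2 < p.2)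
  ∨ (p.1 < (CP X G p).1.1 ∧ (CP X G p).2.1 ≤ p.1 ∧ (CP X G p).2.2 < p.2)

/-- A pair is good if no point of `X` lies in the open rectangle spanned by it. -/
def IsGoodPair (X : Finset Pt) (pr : Pt × Pt) : Prop :=
  ∀ r ∈ X, ¬ inOpenRect pr.1 pr.2 r

/-- `B` is a block of `X`: the set of points of `X` whose times lie in some interval, whose
keys form a set of consecutive integers; blocks are nonempty. -/
def IsBlock (X B : Finset Pt) : Prop :=
  B.Nonempty ∧ (∃ i j : ℤ, B = X.filter (fun p => i ≤ p.2 ∧ p.2 ≤ j)) ∧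
    ∃ c d : ℤ, B.image Prod.fst = Finset.Icc c d

/-- `Top(B)`: the point of `B` with the smallest time. -/
noncomputable def TopPt (B : Finset Pt) : Pt :=
  ((B.filter (fun p => ∀ q ∈ B, p.2 ≤ q.2)).toList).headI

/-- A decomposition tree of `X`: a rooted tree whose nodes are blocks of `X`, whose root is
`X`, whose leaves are exactly the singleton blocks, and in which the children of every
internal node partition it. -/
structure DecompTree (X : Finset Pt) where
  nodes : Finset (Finset Pt)
  parent : Finset Pt → Finset Pt
  isBlock_nodes : ∀ B ∈ nodes, IsBlock X B
  root_mem : X ∈ nodes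
  parent_mem : ∀ B ∈ nodes, B ≠ X → parent B ∈ nodes
  ssubset_parent : ∀ B ∈ nodes, B ≠ X → B ⊂ parent B
  leaf_iff : ∀ B ∈ nodes, (¬ ∃ C ∈ nodes, C ≠ X ∧ parent C = B) ↔ B.card = 1
  children_partition : ∀ B ∈ nodes, B.card ≠ 1 →
    ∀ x ∈ B, ∃! C, C ∈ nodes ∧ C ≠ X ∧ parent C = B ∧ x ∈ C

/-- The children of a node `B` in a decomposition tree. -/
noncomputable def DecompTree.children {X : Finset Pt} (T : DecompTree X) (B : Finset Pt) :
    Finset (Finset Pt) :=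
  T.nodes.filter (fun C => C ≠ X ∧ T.parent C = B)

/-- `X` is `k`-decomposable: it admits a decomposition tree in which every node has at most
`k` children. -/
def kDecomposable (k : ℕ) (X : Finset Pt) : Prop :=
  ∃ T : DecompTree X, ∀ B ∈ T.nodes, (T.children B).card ≤ k

/-- `RT(p)`: the node of the decomposition tree closest to the root (i.e. containing all
others) among the nodes `B` with `Top(B) = p`. -/
noncomputable def RT {X : Finset Pt} (T : DecompTree X) (p : Pt) : Finset Pt :=
  (((T.nodes.filter (fun B => TopPt B = p)).filter
      (fun B => ∀ C ∈ T.nodes, TopPt C = p → C ⊆ B)).toList).headI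

/-- The points added by GREEDY (`G`) while processing `Top(B)` that lie to the left of
`Top(B)`. -/
noncomputable def leftSet (G B : Finset Pt) : Finset Pt :=
  G.filter (fun s => s.2 = (TopPt B).2 ∧ s.1 < (TopPt B).1)

/-- `Left(B)`: among the points added by GREEDY while processing `Top(B)` with key less than
`key (Top B)`, the one with the largest key (junk if none exists). -/
noncomputable def leftPt (G B : Finset Pt) : Pt :=
  (((leftSet G B).filter (fun s => ∀ r ∈ leftSet G B, r.1 ≤ s.1)).toList).headI

/-- The points added by GREEDY (`G`) while processing `Top(B)` that lie to the right of
`Top(B)`. -/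
noncomputable def rightSet (G B : Finset Pt) : Finset Pt :=
  G.filter (fun s => s.2 = (TopPt B).2 ∧ (TopPt B).1 < s.1)

/-- `Right(B)`: among the points added by GREEDY while processing `Top(B)` with key greater
than `key (Top B)`, the one with the smallest key (junk if none exists). -/
noncomputable def rightPt (G B : Finset Pt) : Pt :=
  (((rightSet G B).filter (fun s => ∀ r ∈ rightSet G B, s.1 ≤ r.1)).toList).headI

/-- The rectangle with corners `p` and `x` meets the points of `W` of time less than `p.2`
in nothing but `x`. -/
def EmptyBefore (W : Finset Pt) (p x : Pt) : Prop :=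
  ∀ r ∈ W, r.2 < p.2 → inRect p x r → r = x

/-- The local rules satisfied by `W = X ∪ G`, where `G` is the set of points added by GREEDY. -/
structure GreedyClosed (X W : Finset Pt) : Prop where
  subset : X ⊆ W
  key_inj : ∀ x ∈ X, ∀ y ∈ X, x.1 = y.1 → x = y
  time_inj : ∀ x ∈ X, ∀ y ∈ X, x.2 = y.2 → x = y
  origin : ∀ w ∈ W, ∃ x ∈ X, x.2 = w.2 ∧
    (w = x ∨ ∃ s < w.2, (w.1, s) ∈ W ∧ EmptyBefore W x (w.1, s))
  touch : ∀ x ∈ X, ∀ w ∈ W, w.2 < x.2 → w.1 ≠ x.1 → EmptyBefore W x w → (w.1, x.2) ∈ W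

/-- `R = (p, q)` is a good zag pair with `key p < key q`, realised at the key `k`. -/
structure IsGoodZag (X W : Finset Pt) (R : Pt × Pt) (k : ℤ) : Prop where
  fst_mem : R.1 ∈ X
  snd_mem : R.2 ∈ X
  time_lt : R.2.2 < R.1.2
  lt_key : R.1.1 < k
  key_le : k ≤ R.2.1
  mem : (k, R.2.2) ∈ W
  empty : EmptyBefore W R.1 (k, R.2.2)
  good : IsGoodPair X R

/-- `I` is a family of empty rectangles `(p, q)` spanned by points of `X` with `key p < key q` and
`time q < time p`, no two of which properly overlap at a corner. -/
structure IsIndep (X : Finset Pt) (I : Finset (Pt × Pt)) : Prop where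
  fst_mem : ∀ R ∈ I, R.1 ∈ X
  snd_mem : ∀ R ∈ I, R.2 ∈ X
  key_lt : ∀ R ∈ I, R.1.1 < R.2.1
  time_lt : ∀ R ∈ I, R.2.2 < R.1.2
  good : ∀ R ∈ I, IsGoodPair X R
  no_overlap : ∀ R ∈ I, ∀ Q ∈ I, ¬ (Q.1.1 < R.1.1 ∧ R.1.1 < Q.2.1 ∧ Q.2.1 < R.2.1 ∧
    Q.2.2 < R.2.2 ∧ R.2.2 < Q.1.2 ∧ Q.1.2 < R.1.2)

/-- `a` is the left neighbour of `b` in its row of `S`. -/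
def IsLeftNeighbour (S : Finset Pt) (a b : Pt) : Prop :=
  a ∈ S ∧ b ∈ S ∧ a.2 = b.2 ∧ a.1 < b.1 ∧ ∀ s ∈ S, s.2 = b.2 → s.1 < b.1 → s.1 ≤ a.1

lemma IsLeftNeighbour.unique {S : Finset Pt} {a a' b : Pt} (h : IsLeftNeighbour S a b)
    (h' : IsLeftNeighbour S a' b) : a = a' := by
  obtain ⟨ha, -, h1, h2, h3⟩ := h
  obtain ⟨ha', -, h1', h2', h3'⟩ := h'
  have := h3 a' ha' h1' h2'
  have := h3' a ha h1 h2
  exact Prod.ext (by omega) (by omega)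

/-- In an arborally satisfied set, every vertical line separating the corners `p`, `q` is crossed
by two row neighbours inside the rectangle spanned by `p` and `q`. -/
lemma exists_isLeftNeighbour_crossing {S : Finset Pt} (hS : ArbSat S) {p q : Pt} (hp : p ∈ S)
    (hq : q ∈ S) (ht : q.2 < p.2) {c : ℤ} (hpc : p.1 ≤ c) (hcq : c < q.1) :
    ∃ a b, IsLeftNeighbour S a b ∧ p.1 ≤ a.1 ∧ a.1 ≤ c ∧ c < b.1 ∧ b.1 ≤ q.1 ∧
      q.2 ≤ b.2 ∧ b.2 ≤ p.2 := by
  let C : Finset (Pt × Pt) := (S ×ˢ S).filter fun z =>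
    p.1 ≤ z.1.1 ∧ z.1.1 ≤ c ∧ c < z.2.1 ∧ z.2.1 ≤ q.1 ∧ q.2 ≤ z.2.2 ∧ z.2.2 ≤ z.1.2 ∧ z.1.2 ≤ p.2
  have hC : C.Nonempty := ⟨(p, q), by simp [C, hp, hq]; omega⟩
  obtain ⟨⟨a, b⟩, hab, hmin⟩ := C.exists_min_image (fun z => z.1.2 - z.2.2 + z.2.1 - z.1.1) hC
  simp only [C, mem_filter, mem_product] at hab
  obtain ⟨⟨ha, hb⟩, h1, h2, h3, h4, h5, h6, h7⟩ := hab
  have key : ∀ r ∈ S, a.1 ≤ r.1 → r.1 ≤ b.1 → b.2 ≤ r.2 → r.2 ≤ a.2 → r = a ∨ r = b := by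
    intro r hr k1 k2 k3 k4
    rcases le_or_gt r.1 c with hc | hc
    · have := hmin (r, b) (by simp [C, hr, hb]; omega)
      left
      simp only at this
      exact Prod.ext (by omega) (by omega)
    · have := hmin (a, r) (by simp [C, hr, ha]; omega)
      right
      simp only at this
      exact Prod.ext (by omega) (by omega)
  have heq : a.2 = b.2 := by
    rcases hS a ha b hb with h | h | ⟨r, hr, hra, hrb, hrect⟩
    · omega
    · exact h
    · unfold inRect at hrect
      rcases key r hr (by omega) (by omega) (by omega) (by omega) with h | h
      · exact absurd h hra
      · exact absurd h hrb
  refine ⟨a, b, ⟨ha, hb, heq, by omega, fun s hs hs2 hs1 => ?_⟩, h1, h2, h3, h4, h5, by omega⟩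
  by_contra hlt
  rcases key s hs (by omega) (by omega) (by omega) (by omega) with h | h
  · subst h; omega
  · subst h; omega

/-- A rectangle that is not wider than `R` and meets it crosses `R` from top to bottom. -/
lemma IsIndep.crosses {X : Finset Pt} {I : Finset (Pt × Pt)} (hI : IsIndep X I)
    (hk : ∀ x ∈ X, ∀ y ∈ X, x.1 = y.1 → x = y) (ht : ∀ x ∈ X, ∀ y ∈ X, x.2 = y.2 → x = y)
    {R Q : Pt × Pt} (hR : R ∈ I) (hQ : Q ∈ I) (hw : Q.2.1 - Q.1.1 ≤ R.2.1 - R.1.1)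
    (t1 : Q.2.2 ≤ R.1.2) (t2 : R.2.2 ≤ Q.1.2) (k1 : Q.1.1 < R.2.1) (k2 : R.1.1 < Q.2.1) :
    R.1.1 ≤ Q.1.1 ∧ Q.2.1 ≤ R.2.1 ∧ R.1.2 ≤ Q.1.2 ∧ Q.2.2 ≤ R.2.2 := by
  have a1 := hI.fst_mem R hR
  have a2 := hI.snd_mem R hR
  have b1 := hI.fst_mem Q hQ
  have b2 := hI.snd_mem Q hQ
  have n1 := hI.no_overlap R hR Q hQ
  have n2 := hI.no_overlap Q hQ R hR
  have g1 := hI.good R hR _ b1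
  have g2 := hI.good R hR _ b2
  have g3 := hI.good Q hQ _ a1
  have g4 := hI.good Q hQ _ a2
  have l1 := hI.key_lt R hR
  have l2 := hI.key_lt Q hQ
  have l3 := hI.time_lt R hR
  have l4 := hI.time_lt Q hQ
  have e1 := ht _ a1 _ b1
  have e2 := ht _ a1 _ b2
  have e3 := ht _ a2 _ b1
  have e4 := ht _ a2 _ b2
  have f1 := hk _ a1 _ b1
  have f2 := hk _ a1 _ b2
  have f3 := hk _ a2 _ b1
  have f4 := hk _ a2 _ b2
  simp only [Prod.ext_iff] at e1 e2 e3 e4 f1 f2 f3 f4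
  unfold inOpenRect at g1 g2 g3 g4
  have s1 : R.1.1 ≤ Q.1.1 := by omega
  have s2 : Q.2.1 ≤ R.2.1 := by omega
  exact ⟨s1, s2, by omega, by omega⟩

/-- The widest rectangle of an independent family has a vertical line that no other rectangle of
the family crosses within it. -/
lemma IsIndep.exists_line {X : Finset Pt} {I : Finset (Pt × Pt)} (hI : IsIndep X I)
    (hk : ∀ x ∈ X, ∀ y ∈ X, x.1 = y.1 → x = y) (ht : ∀ x ∈ X, ∀ y ∈ X, x.2 = y.2 → x = y)
    {R : Pt × Pt} (hR : R ∈ I) (hw : ∀ Q ∈ I, Q.2.1 - Q.1.1 ≤ R.2.1 - R.1.1) :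
    ∃ c, R.1.1 ≤ c ∧ c < R.2.1 ∧ ∀ Q ∈ I, Q ≠ R → Q.1.1 ≤ c → c < Q.2.1 →
      Q.2.2 ≤ R.1.2 → R.2.2 ≤ Q.1.2 → False := by
  by_cases hne : (I.filter fun Q => Q ≠ R ∧ Q.1 = R.1).Nonempty
  · obtain ⟨P, hP, hmax⟩ := Finset.exists_max_image _ (fun Q : Pt × Pt => Q.2.1) hne
    simp only [mem_filter] at hP hmax
    obtain ⟨hPI, hPR, hP1⟩ := hP
    have hkP := hI.key_lt P hPI
    have hwP := hw P hPI
    have hPe : P.2.1 ≠ R.2.1 := fun h =>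
      hPR (Prod.ext hP1 (hk _ (hI.snd_mem P hPI) _ (hI.snd_mem R hR) h))
    have hP11 : P.1.1 = R.1.1 := by rw [hP1]
    have hP12 : P.1.2 = R.1.2 := by rw [hP1]
    have tR := hI.time_lt R hR
    have tP := hI.time_lt P hPI
    have cP := hI.crosses hk ht hR hPI hwP (by omega) (by omega) (by omega) (by omega)
    refine ⟨P.2.1, by omega, by omega, fun Q hQ hQR h1 h2 h3 h4 => ?_⟩
    have cQ := hI.crosses hk ht hR hQ (hw Q hQ) h3 h4 (by omega) (by omega)
    have hne : Q.1.1 ≠ R.1.1 := fun h => by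
      have := hmax Q ⟨hQ, hQR, hk _ (hI.fst_mem Q hQ) _ (hI.fst_mem R hR) h⟩
      omega
    have hne' : Q.1.1 ≠ P.2.1 := fun h => by
      have := hk _ (hI.fst_mem Q hQ) _ (hI.snd_mem P hPI) h
      rw [this] at cQ
      omega
    have g1 := hI.good P hPI _ (hI.fst_mem Q hQ)
    have g2 := hI.good Q hQ _ (hI.snd_mem P hPI)
    have e1 := ht _ (hI.fst_mem P hPI) _ (hI.fst_mem Q hQ)
    have e2 := ht _ (hI.snd_mem P hPI) _ (hI.snd_mem Q hQ)
    have n1 := hI.no_overlap Q hQ P hPI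
    simp only [Prod.ext_iff] at e1 e2
    unfold inOpenRect at g1 g2
    omega
  · refine ⟨R.1.1, le_rfl, hI.key_lt R hR, fun Q hQ hQR h1 h2 h3 h4 => hne ⟨Q, ?_⟩⟩
    have hkR := hI.key_lt R hR
    have cQ := hI.crosses hk ht hR hQ (hw Q hQ) h3 h4 (by omega) (by omega)
    exact mem_filter.2 ⟨hQ, hQR, hk _ (hI.fst_mem Q hQ) _ (hI.fst_mem R hR) (by omega)⟩

lemma IsIndep.mono {X : Finset Pt} {I J : Finset (Pt × Pt)} (hI : IsIndep X I) (h : J ⊆ I) :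
    IsIndep X J :=
  ⟨fun R hR => hI.1 R (h hR), fun R hR => hI.2 R (h hR), fun R hR => hI.3 R (h hR),
    fun R hR => hI.4 R (h hR), fun R hR => hI.5 R (h hR),
    fun R hR Q hQ => hI.6 R (h hR) Q (h hQ)⟩

/-- Distinct rectangles of an independent family can be charged to distinct pairs of row neighbours
lying in them. -/
lemma IsIndep.exists_charge {X S : Finset Pt} {I : Finset (Pt × Pt)} (hI : IsIndep X I)
    (hk : ∀ x ∈ X, ∀ y ∈ X, x.1 = y.1 → x = y) (ht : ∀ x ∈ X, ∀ y ∈ X, x.2 = y.2 → x = y)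
    (hXS : X ⊆ S) (hS : ArbSat S) :
    ∃ f : Pt × Pt → Pt, Set.InjOn f I ∧ ∀ R ∈ I, ∃ a, IsLeftNeighbour S a (f R) ∧
      R.1.1 ≤ a.1 ∧ (f R).1 ≤ R.2.1 ∧ R.2.2 ≤ (f R).2 ∧ (f R).2 ≤ R.1.2 := by
  induction I using Finset.induction_on_max_value (fun Q : Pt × Pt => Q.2.1 - Q.1.1) with
  | empty => exact ⟨fun R => R.1, by simp, by simp⟩
  | insert R J hRJ hmax ih =>
    obtain ⟨f, hf, hfJ⟩ := ih (hI.mono (subset_insert R J))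
    have hR : R ∈ insert R J := mem_insert_self R J
    obtain ⟨c, c1, c2, hc⟩ := hI.exists_line hk ht hR (by
      intro Q hQ
      rcases mem_insert.1 hQ with rfl | hQ
      · exact le_rfl
      · exact hmax Q hQ)
    obtain ⟨a, b, hab, h1, h2, h3, h4, h5, h6⟩ := exists_isLeftNeighbour_crossing hS
      (hXS (hI.fst_mem R hR)) (hXS (hI.snd_mem R hR)) (hI.time_lt R hR) c1 c2
    have hne : ∀ Q ∈ J, Q ≠ R := fun Q hQ h => hRJ (h ▸ hQ)
    have hfb : ∀ Q ∈ J, f Q ≠ b := by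
      intro Q hQ h
      obtain ⟨a', ha', k1, k2, k3, k4⟩ := hfJ Q hQ
      rw [h] at ha' k2 k3 k4
      obtain rfl := ha'.unique hab
      exact hc Q (mem_insert_of_mem hQ) (hne Q hQ) (by omega) (by omega) (by omega) (by omega)
    refine ⟨fun Q => if Q = R then b else f Q, ?_, ?_⟩
    · intro P hP Q hQ hPQ
      simp only [coe_insert, Set.mem_insert_iff, mem_coe] at hP hQ
      rcases hP with rfl | hP <;> rcases hQ with rfl | hQ
      · rfl
      · simp only [if_true, hne Q hQ, if_false] at hPQ
        exact absurd hPQ.symm (hfb Q hQ)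
      · simp only [if_true, hne P hP, if_false] at hPQ
        exact absurd hPQ (hfb P hP)
      · simp only [hne P hP, hne Q hQ, if_false] at hPQ
        exact hf hP hQ hPQ
    · intro Q hQ
      rcases mem_insert.1 hQ with rfl | hQ
      · simp only [if_true]
        exact ⟨a, hab, h1, h4, h5, h6⟩
      · simp only [hne Q hQ, if_false]
        exact hfJ Q hQ

/-- The independent rectangle bound for rectangles of one sign. -/
lemma IsIndep.card_add_card_le {X S : Finset Pt} {I : Finset (Pt × Pt)} (hI : IsIndep X I)
    (hk : ∀ x ∈ X, ∀ y ∈ X, x.1 = y.1 → x = y) (ht : ∀ x ∈ X, ∀ y ∈ X, x.2 = y.2 → x = y)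
    (hXS : X ⊆ S) (hS : ArbSat S) : I.card + X.card ≤ S.card := by
  obtain ⟨f, hf, hfI⟩ := hI.exists_charge hk ht hXS hS
  have hleft : ∀ x : Pt, ∃ y, x ∈ X → y ∈ S ∧ y.2 = x.2 ∧ ∀ s ∈ S, s.2 = x.2 → y.1 ≤ s.1 := by
    intro x
    by_cases hx : x ∈ X
    · obtain ⟨y, hy, hmin⟩ := Finset.exists_min_image (S.filter fun s => s.2 = x.2) Prod.fst
        ⟨x, mem_filter.2 ⟨hXS hx, rfl⟩⟩
      simp only [mem_filter] at hy hmin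
      exact ⟨y, fun _ => ⟨hy.1, hy.2, fun s hs h => hmin s ⟨hs, h⟩⟩⟩
    · exact ⟨x, fun h => absurd h hx⟩
  choose g hg using hleft
  have hgi : Set.InjOn g X := by
    intro x hx y hy h
    apply ht x hx y hy
    rw [← (hg x hx).2.1, ← (hg y hy).2.1, h]
  have hdisj : Disjoint (I.image f) (X.image g) := by
    rw [Finset.disjoint_left]
    intro w hw hw'
    obtain ⟨R, hR, rfl⟩ := mem_image.1 hw
    obtain ⟨x, hx, h⟩ := mem_image.1 hw'
    obtain ⟨a, ⟨ha, -, h2, h3, -⟩, -⟩ := hfI R hR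
    obtain ⟨-, h4, h5⟩ := hg x hx
    rw [h] at h4 h5
    have := h5 a ha (by omega)
    omega
  rw [← Finset.card_image_of_injOn hf, ← Finset.card_image_of_injOn hgi,
    ← Finset.card_union_of_disjoint hdisj]
  apply Finset.card_le_card
  intro w hw
  rcases mem_union.1 hw with hw | hw
  · obtain ⟨R, hR, rfl⟩ := mem_image.1 hw
    obtain ⟨a, h, -⟩ := hfI R hR
    exact h.2.1
  · obtain ⟨x, hx, rfl⟩ := mem_image.1 hw
    exact (hg x hx).1

/-- Between the two times of a good zag pair, no point is touched strictly between the realising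
key and the far end of the pair. -/
lemma IsGoodZag.not_mem {X W : Finset Pt} (hW : GreedyClosed X W) {Q : Pt × Pt} {k : ℤ}
    (hQ : IsGoodZag X W Q k) (w : Pt) (hw : w ∈ W) (h1 : k < w.1) (h2 : w.1 < Q.2.1)
    (h3 : Q.2.2 < w.2) (h4 : w.2 < Q.1.2) : False := by
  let B := W.filter fun w => k < w.1 ∧ w.1 < Q.2.1 ∧ Q.2.2 < w.2 ∧ w.2 < Q.1.2
  obtain ⟨v, hv, hmin⟩ := B.exists_min_image Prod.snd ⟨w, mem_filter.2 ⟨hw, h1, h2, h3, h4⟩⟩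
  simp only [B, mem_filter] at hv hmin
  obtain ⟨hvW, v1, v2, v3, v4⟩ := hv
  obtain ⟨x, hx, hxv, hor⟩ := hW.origin v hvW
  have hg := hQ.good x hx
  have := hQ.lt_key
  unfold inOpenRect at hg
  rcases hor with rfl | ⟨s, hs, hsW, he⟩
  · omega
  · have hsle : s ≤ Q.2.2 := by
      by_contra hlt
      have := hmin (v.1, s) ⟨hsW, v1, v2, by simpa using hlt, by simp only; omega⟩
      simp only at this
      omega
    rcases le_or_gt Q.2.1 x.1 with hc | hc
    · have := he Q.2 (hW.subset hQ.snd_mem) (by omega) (by unfold inRect; simp only; omega)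
      rw [this] at v2
      simp at v2
    · have := he (k, Q.2.2) hQ.mem (by simp only; omega) (by unfold inRect; simp only; omega)
      have := congrArg Prod.fst this
      simp only at this
      omega

lemma IsGoodZag.no_overlap {X W : Finset Pt} (hW : GreedyClosed X W) {R Q : Pt × Pt} {k l : ℤ}
    (hR : IsGoodZag X W R k) (hQ : IsGoodZag X W Q l) :
    ¬ (Q.1.1 < R.1.1 ∧ R.1.1 < Q.2.1 ∧ Q.2.1 < R.2.1 ∧
      Q.2.2 < R.2.2 ∧ R.2.2 < Q.1.2 ∧ Q.1.2 < R.1.2) := by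
  rintro ⟨h1, h2, h3, h4, h5, h6⟩
  have hRk := hR.lt_key
  have hQl := hQ.lt_key
  have hnot : (k, Q.1.2) ∉ W := fun h => by
    have := congrArg Prod.snd (hR.empty _ h h6 (by unfold inRect; simp only; omega))
    simp only at this
    omega
  apply hnot
  refine hW.touch Q.1 hQ.fst_mem (k, R.2.2) hR.mem h5 (by simp only; omega) ?_
  intro r hr hrt hrect
  unfold inRect at hrect
  simp only at hrect
  by_cases c1 : r.1 ≤ l
  · have := congrArg Prod.snd (hQ.empty r hr hrt (by unfold inRect; simp only; omega))
    simp only at this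
    omega
  · by_cases c2 : R.1.1 ≤ r.1
    · exact hR.empty r hr (by omega) (by unfold inRect; simp only; omega)
    · exact (hQ.not_mem hW r hr (by omega) (by omega) (by omega) (by omega)).elim

/-- The lower bound for good zag pairs of one sign. -/
lemma card_goodZag_add_card_le {X W S A : Finset Pt} (hW : GreedyClosed X W) (hXS : X ⊆ S)
    (hS : ArbSat S) (φ : Pt → Pt × Pt) (hφ : ∀ r ∈ A, IsGoodZag X W (φ r) r.1 ∧ (φ r).1.2 = r.2) :
    A.card + X.card ≤ S.card := by
  have hinj : Set.InjOn φ A := by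
    have key_le : ∀ r ∈ A, ∀ s ∈ A, φ r = φ s → s.1 ≤ r.1 := by
      intro r hr s hs h
      obtain ⟨zr, -⟩ := hφ r hr
      obtain ⟨zs, -⟩ := hφ s hs
      by_contra hlt
      rw [h] at zr
      have := zr.lt_key
      have := congrArg Prod.fst (zs.empty (r.1, (φ s).2.2) zr.mem (by simpa using zr.time_lt)
        (by unfold inRect; simp only; omega))
      simp only at this
      omega
    intro r hr s hs h
    refine Prod.ext (le_antisymm (key_le s hs r hr h.symm) (key_le r hr s hs h)) ?_
    rw [← (hφ r hr).2, ← (hφ s hs).2, h]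
  rw [← Finset.card_image_of_injOn hinj]
  refine IsIndep.card_add_card_le (X := X) ?_ hW.key_inj hW.time_inj hXS hS
  have hz : ∀ R ∈ A.image φ, ∃ k, IsGoodZag X W R k := by
    intro R hR
    obtain ⟨r, hr, rfl⟩ := mem_image.1 hR
    exact ⟨r.1, (hφ r hr).1⟩
  refine ⟨fun R hR => ?_, fun R hR => ?_, fun R hR => ?_, fun R hR => ?_, fun R hR => ?_,
    fun R hR Q hQ => ?_⟩ <;> obtain ⟨k, h⟩ := hz R hR
  · exact h.fst_mem
  · exact h.snd_mem
  · exact h.lt_key.trans_le h.key_le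
  · exact h.time_lt
  · exact h.good
  · obtain ⟨l, h'⟩ := hz Q hQ
    exact h.no_overlap hW h'

/-- Reflection of the key axis. -/
def flipKey : Pt ≃ Pt := (Equiv.neg ℤ).prodCongr (Equiv.refl ℤ)

@[simp] lemma flipKey_apply (p : Pt) : flipKey p = (-p.1, p.2) := rfl

@[simp] lemma flipKey_symm_apply (p : Pt) : flipKey.symm p = (-p.1, p.2) := rfl

lemma mem_map_flipKey {S : Finset Pt} {p : Pt} :
    p ∈ S.map flipKey.toEmbedding ↔ (-p.1, p.2) ∈ S := by
  rw [Finset.mem_map_equiv, flipKey_symm_apply]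

lemma inRect_flipKey {p q r : Pt} :
    inRect (-p.1, p.2) (-q.1, q.2) (-r.1, r.2) ↔ inRect p q r := by
  unfold inRect
  simp only
  omega

lemma inOpenRect_flipKey {p q r : Pt} :
    inOpenRect (-p.1, p.2) (-q.1, q.2) (-r.1, r.2) ↔ inOpenRect p q r := by
  unfold inOpenRect
  simp only
  omega

lemma eq_of_flipKey_eq {p q : Pt} (h : ((-p.1, p.2) : Pt) = (-q.1, q.2)) : p = q :=
  flipKey.injective h

lemma ArbSat.map_flipKey {S : Finset Pt} (hS : ArbSat S) : ArbSat (S.map flipKey.toEmbedding) := by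
  intro p hp q hq
  rw [mem_map_flipKey] at hp hq
  rcases hS _ hp _ hq with h | h | ⟨r, hr, h1, h2, h3⟩
  · left; simpa using h
  · right; left; exact h
  · right; right
    refine ⟨(-r.1, r.2), by simpa [mem_map_flipKey] using hr, ?_, ?_, ?_⟩
    · rintro rfl; simp at h1
    · rintro rfl; simp at h2
    · rw [← inRect_flipKey]; simpa using h3

lemma EmptyBefore.map_flipKey {W : Finset Pt} {p x : Pt} (h : EmptyBefore W p x) :
    EmptyBefore (W.map flipKey.toEmbedding) (-p.1, p.2) (-x.1, x.2) := by
  intro r hr hrt hrect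
  rw [mem_map_flipKey] at hr
  apply eq_of_flipKey_eq
  simp only [neg_neg]
  refine h _ hr hrt ?_
  rw [← inRect_flipKey]
  simpa using hrect

lemma EmptyBefore.of_flipKey {W : Finset Pt} {p x : Pt}
    (h : EmptyBefore (W.map flipKey.toEmbedding) p x) :
    EmptyBefore W (-p.1, p.2) (-x.1, x.2) := by
  intro r hr hrt hrect
  apply eq_of_flipKey_eq
  simp only [neg_neg]
  refine h _ (by simpa [mem_map_flipKey] using hr) hrt ?_
  rw [← inRect_flipKey]
  simpa using hrect

lemma GreedyClosed.map_flipKey {X W : Finset Pt} (h : GreedyClosed X W) :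
    GreedyClosed (X.map flipKey.toEmbedding) (W.map flipKey.toEmbedding) where
  subset := Finset.map_subset_map.2 h.subset
  key_inj x hx y hy hxy := by
    rw [mem_map_flipKey] at hx hy
    exact eq_of_flipKey_eq (h.key_inj _ hx _ hy (by simpa using hxy))
  time_inj x hx y hy hxy := by
    rw [mem_map_flipKey] at hx hy
    exact eq_of_flipKey_eq (h.time_inj _ hx _ hy hxy)
  origin w hw := by
    rw [mem_map_flipKey] at hw
    obtain ⟨x, hx, hxw, hor⟩ := h.origin _ hw
    refine ⟨(-x.1, x.2), by simpa [mem_map_flipKey] using hx, hxw, ?_⟩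
    rcases hor with rfl | ⟨s, hs, hsW, he⟩
    · left; simp
    · right
      refine ⟨s, hs, by simpa [mem_map_flipKey] using hsW, ?_⟩
      simpa using he.map_flipKey
  touch x hx w hw hwx hne he := by
    rw [mem_map_flipKey] at hx hw ⊢
    exact h.touch _ hx _ hw hwx (by simpa using hne) he.of_flipKey

/-- The first point above a point `r` added by GREEDY lies at the time of the second component of
`CP r` and spans with the first component a rectangle that is empty before the time of `r`. -/
lemma GreedyClosed.exists_CP {X G : Finset Pt} (hW : GreedyClosed X (X ∪ G)) {r : Pt}
    (hr : r ∈ X ∪ G) (hne : (CP X G r).1.1 ≠ r.1) :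
    (CP X G r).1 ∈ X ∧ (CP X G r).2 ∈ X ∧ (CP X G r).1.2 = r.2 ∧ (CP X G r).2.2 < r.2 ∧
      (r.1, (CP X G r).2.2) ∈ X ∪ G ∧
      EmptyBefore (X ∪ G) (CP X G r).1 (r.1, (CP X G r).2.2) := by
  have hOP : ∀ w : Pt, ∀ x ∈ X, x.2 = w.2 → OP X w = x := by
    intro w x hx hxw
    have : X.filter (fun p => p.2 = w.2) = {x} := by
      ext y
      simp only [mem_filter, mem_singleton]
      constructor
      · rintro ⟨hy, hyw⟩
        exact hW.time_inj y hy x hx (hyw.trans hxw.symm)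
      · rintro rfl
        exact ⟨hx, hxw⟩
    simp [OP, this]
  obtain ⟨x, hx, hxr, hor⟩ := hW.origin r hr
  have h1 : (CP X G r).1 = x := hOP r x hx hxr
  rcases hor with rfl | ⟨s, hs, hsW, he⟩
  · exact absurd (congrArg Prod.fst h1) hne
  have hfirst : firstAbove (X ∪ G) r = (r.1, s) := by
    have : (((X ∪ G).filter (fun q => q.1 = r.1 ∧ q.2 < r.2)).image Prod.snd).max =
        (s : WithBot ℤ) := by
      apply le_antisymm
      · apply Finset.max_le
        intro a ha
        obtain ⟨w, hw, rfl⟩ := mem_image.1 ha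
        obtain ⟨hw, hw1, hw2⟩ := mem_filter.1 hw
        rw [WithBot.coe_le_coe]
        by_contra hlt
        have := congrArg Prod.snd (he w hw (by omega) (by unfold inRect; simp only; omega))
        simp only at this
        omega
      · exact Finset.le_max (mem_image.2 ⟨(r.1, s), mem_filter.2 ⟨hsW, rfl, hs⟩, rfl⟩)
    unfold firstAbove
    rw [this]
    rfl
  obtain ⟨y, hy, hys, -⟩ := hW.origin _ hsW
  have h2 : (CP X G r).2 = y := by
    unfold CP
    rw [hfirst]
    exact hOP _ y hy hys
  simp only at hys
  rw [h1, h2, hys]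
  exact ⟨hx, hy, hxr, hs, hsW, he⟩

lemma mem_greedyStep {X G : Finset Pt} {t : ℤ} {w : Pt} :
    w ∈ greedyStep X G t ↔ ∃ x ∈ X, x.2 = t ∧ ∃ q ∈ X ∪ G, q.2 < t ∧ q.1 ≠ x.1 ∧
      EmptyBefore (X ∪ G) x q ∧ w = (q.1, t) := by
  simp only [greedyStep, mem_biUnion, mem_image, mem_filter, EmptyBefore]
  constructor
  · rintro ⟨x, ⟨hx, hxt⟩, q, ⟨⟨hq, hqt⟩, hne, he⟩, rfl⟩
    exact ⟨x, hx, hxt, q, hq, hqt, hne, fun r hr hrt => he r ⟨hr, by omega⟩, rfl⟩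
  · rintro ⟨x, hx, hxt, q, hq, hqt, hne, he, rfl⟩
    exact ⟨x, ⟨hx, hxt⟩, q, ⟨⟨hq, hqt⟩, hne, fun r hr => he r hr.1 (by omega)⟩, rfl⟩

lemma mem_greedyUpTo {X : Finset Pt} {n : ℕ} {w : Pt} :
    w ∈ greedyUpTo X n ↔ ∃ t < n, w ∈ greedyStep X (greedyUpTo X t) ((t : ℤ) + 1) := by
  induction n with
  | zero => simp [greedyUpTo]
  | succ n ih =>
    simp only [greedyUpTo, mem_union, ih, Nat.lt_succ_iff_lt_or_eq]
    constructor
    · rintro (⟨t, ht, h⟩ | h)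
      · exact ⟨t, Or.inl ht, h⟩
      · exact ⟨n, Or.inr rfl, h⟩
    · rintro ⟨t, ht | rfl, h⟩
      · exact Or.inl ⟨t, ht, h⟩
      · exact Or.inr h

lemma time_of_mem_greedyStep {X G : Finset Pt} {t : ℤ} {w : Pt} (h : w ∈ greedyStep X G t) :
    w.2 = t := by
  obtain ⟨x, -, -, q, -, -, -, -, rfl⟩ := mem_greedyStep.1 h
  rfl

lemma mem_greedyUpTo_of_time_le {X : Finset Pt} {n t : ℕ} (htn : t ≤ n) {w : Pt}
    (hw : w.2 ≤ (t : ℤ)) : w ∈ greedyUpTo X n ↔ w ∈ greedyUpTo X t := by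
  simp only [mem_greedyUpTo]
  constructor
  · rintro ⟨s, -, h⟩
    have := time_of_mem_greedyStep h
    exact ⟨s, by omega, h⟩
  · rintro ⟨s, hs, h⟩
    exact ⟨s, by omega, h⟩

/-- A step of GREEDY depends only on the earlier points of the whole execution. -/
lemma greedyStep_greedyUpTo {X : Finset Pt} {n t : ℕ} (htn : t ≤ n) :
    greedyStep X (greedyUpTo X t) ((t : ℤ) + 1) = greedyStep X (greedyUpTo X n) ((t : ℤ) + 1) := by
  have h : (X ∪ greedyUpTo X t).filter (fun s => s.2 < (t : ℤ) + 1) =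
      (X ∪ greedyUpTo X n).filter (fun s => s.2 < (t : ℤ) + 1) := by
    ext w
    simp only [mem_filter, mem_union]
    refine and_congr_left fun hw => ?_
    rw [mem_greedyUpTo_of_time_le htn (by omega)]
  unfold greedyStep
  rw [h]

lemma greedyClosed_greedyG {n : ℕ} {X : Finset Pt} (hX : IsPermPointSet n X) :
    GreedyClosed X (X ∪ greedyG n X) := by
  obtain ⟨σ, hσ⟩ := hX
  have hmem : ∀ x ∈ X, ∃ t : Fin n, x = ((((σ t : ℕ) : ℤ) + 1, ((t : ℕ) : ℤ) + 1) : Pt) := by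
    intro x hx
    rw [hσ, mem_image] at hx
    obtain ⟨t, -, h⟩ := hx
    exact ⟨t, h.symm⟩
  refine ⟨subset_union_left, ?_, ?_, ?_, ?_⟩
  · intro x hx y hy h
    obtain ⟨s, rfl⟩ := hmem x hx
    obtain ⟨t, rfl⟩ := hmem y hy
    have : s = t := σ.injective (Fin.ext (by simp only at h; omega))
    rw [this]
  · intro x hx y hy h
    obtain ⟨s, rfl⟩ := hmem x hx
    obtain ⟨t, rfl⟩ := hmem y hy
    have : s = t := Fin.ext (by simp only at h; omega)
    rw [this]
  · intro w hw
    rcases mem_union.1 hw with hw | hw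
    · exact ⟨w, hw, rfl, Or.inl rfl⟩
    · obtain ⟨t, ht, hwt⟩ := mem_greedyUpTo.1 hw
      rw [greedyStep_greedyUpTo ht.le] at hwt
      obtain ⟨x, hx, hxt, q, hq, hqt, -, he, rfl⟩ := mem_greedyStep.1 hwt
      exact ⟨x, hx, hxt, Or.inr ⟨q.2, hqt, hq, he⟩⟩
  · intro x hx w hw hwx hne he
    obtain ⟨t, ht⟩ := hmem x hx
    have hxt : x.2 = ((t : ℕ) : ℤ) + 1 := by rw [ht]
    refine mem_union_right _ (mem_greedyUpTo.2 ⟨t, t.2, ?_⟩)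
    rw [greedyStep_greedyUpTo t.2.le]
    exact mem_greedyStep.2 ⟨x, hx, hxt, w, hw, by omega, hne, he, by rw [hxt]⟩

/-- Let `X` be a permutation point set and `OPT(X)` a point set of minimum
cardinality such that `X ∪ OPT(X)` is arborally satisfied. Then
`2 · |X ∪ OPT(X)| ≥ |GR| + 2 · |X|`, where `GR` is the set of points of `G` whose pair is a
good pair. -/
theorem good_pairs_lower_bound (n : ℕ) (X : Finset Pt) (hX : IsPermPointSet n X)
    (Y : Finset Pt) (hsat : ArbSat (X ∪ Y))
    (hmin : ∀ Z : Finset Pt, ArbSat (X ∪ Z) → Y.card ≤ Z.card) :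
    ((greedyG n X).filter (fun r => inMFC X (greedyG n X) r ∧
        IsGoodPair X (CP X (greedyG n X) r))).card + 2 * X.card ≤ 2 * (X ∪ Y).card := by
  have hW := greedyClosed_greedyG hX
  set G := greedyG n X
  set GR := G.filter (fun r => inMFC X G r ∧ IsGoodPair X (CP X G r))
  have hright : (GR.filter fun r => (CP X G r).1.1 < r.1).card + X.card ≤ (X ∪ Y).card := by
    refine card_goodZag_add_card_le hW subset_union_left hsat (CP X G) fun r hr => ?_
    rw [mem_filter, mem_filter] at hr
    unfold inMFC at hr
    obtain ⟨⟨hrG, hzag, hgood⟩, hlt⟩ := hr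
    obtain ⟨h1, h2, h3, h4, h5, h6⟩ := hW.exists_CP (mem_union_right X hrG) hlt.ne
    exact ⟨⟨h1, h2, by omega, hlt, by omega, h5, h6, hgood⟩, h3⟩
  have hleft : (GR.filter fun r => ¬ (CP X G r).1.1 < r.1).card + X.card ≤ (X ∪ Y).card := by
    have := card_goodZag_add_card_le hW.map_flipKey
      (Finset.map_subset_map.2 (subset_union_left (s₁ := X) (s₂ := Y))) hsat.map_flipKey
      (A := (GR.filter fun r => ¬ (CP X G r).1.1 < r.1).map flipKey.toEmbedding)
      (fun r => (flipKey (CP X G (flipKey r)).1, flipKey (CP X G (flipKey r)).2)) fun r hr => by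
        rw [mem_map_flipKey] at hr
        rw [mem_filter, mem_filter] at hr
        unfold inMFC at hr
        simp only [flipKey_apply] at hr ⊢
        obtain ⟨⟨hrG, hzag, hgood⟩, hlt⟩ := hr
        obtain ⟨h1, h2, h3, h4, h5, h6⟩ :=
          hW.exists_CP (mem_union_right X hrG) (by simp only; omega)
        simp only at h3 h4 h5 h6
        refine ⟨⟨by simpa [mem_map_flipKey] using h1, by simpa [mem_map_flipKey] using h2,
          by simp only; omega, by simp only; omega, by simp only; omega,
          by simpa only [mem_map_flipKey] using h5, by simpa using h6.map_flipKey, ?_⟩, h3⟩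
        intro x hx hin
        rw [mem_map_flipKey] at hx
        refine hgood _ hx ?_
        rw [← inOpenRect_flipKey]
        simpa using hin
    simpa only [Finset.card_map] using this
  have := Finset.card_filter_add_card_filter_not (s := GR) fun r => (CP X G r).1.1 < r.1
  omega
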